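/- Let n ≥ 6 and let G be a connected simple graph on n vertices such that the multiplicity of the largest distance Laplacian eigenvalue of G equals n−3. Then none of the following three graphs is an induced subgraph of G: the 5-cycle C_5; the graph J_2 obtained from the 5-cycle v_1v_2v_3v_4u by adding the chord v_2u; the graph J_3 obtained from the 5-cycle v_1v_2v_3v_4u by adding the chords v_2u and v_3u. -/

import Mathlib

open Matrix

/-- The distance Laplacian matrix of a graph: diagonal entries are the transmissions
`Tr(v) = ∑ u, d(v,u)`, off-diagonal entries are `-d(u,v)`. -/
noncomputable def distLaplacian {V : Type*} [Fintype V] [DecidableEq V]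
    (G : SimpleGraph V) : Matrix V V ℝ :=
  Matrix.of fun i j => if i = j then ∑ k : V, (G.dist i k : ℝ) else -(G.dist i j : ℝ)

/-- The multiplicity of `μ` as an eigenvalue of `M`, i.e. the dimension of the
corresponding eigenspace. -/
noncomputable def eigMult {V : Type*} [Fintype V] (M : Matrix V V ℝ) (μ : ℝ) : ℕ :=
  Module.finrank ℝ (Module.End.eigenspace M.mulVecLin μ)

/-- The largest eigenvalue of a matrix. -/
noncomputable def lambdaMax {V : Type*} [Fintype V] (M : Matrix V V ℝ) : ℝ :=
  sSup {μ : ℝ | Module.End.HasEigenvalue M.mulVecLin μ}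

/-- The transmission of a vertex. -/
noncomputable def transmission {V : Type*} [Fintype V] (G : SimpleGraph V) (v : V) : ℕ :=
  ∑ u : V, G.dist v u

/-- The $5$-cycle `v₁v₂v₃v₄u` on `Fin 5` (with `u = 4`). -/
def C5 : SimpleGraph (Fin 5) :=
  SimpleGraph.fromEdgeSet {s(0, 1), s(1, 2), s(2, 3), s(3, 4), s(4, 0)}

/-- `J₂`: the $5$-cycle `v₁v₂v₃v₄u` plus the chord `v₂u`. -/
def J2 : SimpleGraph (Fin 5) :=
  SimpleGraph.fromEdgeSet {s(0, 1), s(1, 2), s(2, 3), s(3, 4), s(4, 0), s(1, 4)}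

/-- `J₃`: the $5$-cycle `v₁v₂v₃v₄u` plus the chords `v₂u` and `v₃u`. -/
def J3 : SimpleGraph (Fin 5) :=
  SimpleGraph.fromEdgeSet {s(0, 1), s(1, 2), s(2, 3), s(3, 4), s(4, 0), s(1, 4), s(2, 4)}


lemma dL_symm {n : ℕ} (G : SimpleGraph (Fin n)) (i j : Fin n) :
    distLaplacian G i j = distLaplacian G j i := by
  by_cases h : i = j
  · subst h; rfl
  · simp [distLaplacian, h, Ne.symm h, G.dist_comm (u := i)]

lemma dL_row {n : ℕ} (G : SimpleGraph (Fin n)) (i : Fin n) :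
    ∑ j, distLaplacian G i j = 0 := by
  have h : ∀ j, distLaplacian G i j
      = (if i = j then ∑ k, (G.dist i k : ℝ) else 0) - (G.dist i j : ℝ) := by
    intro j
    by_cases h : i = j
    · subst h; simp [distLaplacian]
    · simp [distLaplacian, h]
  simp [h, Finset.sum_sub_distrib]

lemma dL_psd {n : ℕ} (G : SimpleGraph (Fin n)) :
    (lambdaMax (distLaplacian G) • (1 : Matrix (Fin n) (Fin n) ℝ) - distLaplacian G).PosSemidef := by
  set L := distLaplacian G with hL
  have hH : (lambdaMax L • (1 : Matrix (Fin n) (Fin n) ℝ) - L).IsHermitian := by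
    ext i j
    have := dL_symm G i j
    simp [Matrix.one_apply, ← hL] at this ⊢
    rw [this]
    simp [eq_comm]
  rw [hH.posSemidef_iff_eigenvalues_nonneg]
  intro j
  have h1 := hH.mulVec_eigenvectorBasis j
  set v : Fin n → ℝ := (hH.eigenvectorBasis j).ofLp with hv
  set μ := hH.eigenvalues j
  have hv0 : v ≠ 0 := by
    intro h0
    have : hH.eigenvectorBasis j = 0 := by
      ext k
      exact congrFun h0 k
    have h2 := hH.eigenvectorBasis.orthonormal.1 j
    rw [this] at h2
    simp at h2
  have h3 : Module.End.HasEigenvalue L.mulVecLin (lambdaMax L - μ) := by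
    apply Module.End.hasEigenvalue_of_hasEigenvector (x := v)
    refine ⟨?_, hv0⟩
    rw [Module.End.mem_eigenspace_iff]
    rw [Matrix.sub_mulVec, Matrix.smul_mulVec, Matrix.one_mulVec] at h1
    rw [Matrix.mulVecLin_apply, sub_smul, ← h1]
    abel
  have h4 : lambdaMax L - μ ≤ lambdaMax L :=
    le_csSup (Module.End.finite_hasEigenvalue _).bddAbove h3
  show 0 ≤ μ
  linarith

lemma core (n : ℕ) (hn : 6 ≤ n) (G : SimpleGraph (Fin n)) (hG : G.Connected)
    (hmult : eigMult (distLaplacian G) (lambdaMax (distLaplacian G)) = n - 3)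
    (a b : Fin n) (hab : a ≠ b) (hadj : ¬ G.Adj a b) :
    ∃ (N : Matrix (Fin n) (Fin n) ℝ) (e : ℝ), e < 0 ∧
      (∀ i j, i ≠ j → N i j = (G.dist i j : ℝ) - 1 + e) ∧ (∀ i, 0 ≤ N i i) ∧
      ∀ r s : Fin 3 → Fin n, (N.submatrix r s).det = 0 := by
  have hpsd := dL_psd G
  set L := distLaplacian G with hL
  set l := lambdaMax L with hl
  have hn0 : (0 : ℝ) < n := by positivity
  have hn6 : (6 : ℝ) ≤ n := by exact_mod_cast hn
  have hone : L *ᵥ (fun _ => (1 : ℝ)) = 0 := by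
    ext i
    simp only [mulVec, dotProduct, mul_one]
    exact dL_row G i
  set N : Matrix (Fin n) (Fin n) ℝ := l • 1 - L - Matrix.of fun _ _ => l / n with hN
  have hdiag : ∀ i, 0 ≤ N i i := by
    intro i
    have h := hpsd.dotProduct_mulVec_nonneg (Pi.single i 1 - (1 / (n : ℝ)) • fun _ => (1 : ℝ))
    have h2 : (l • (1 : Matrix (Fin n) (Fin n) ℝ) - L) *ᵥ
        (Pi.single i 1 - (1 / (n : ℝ)) • fun _ => (1 : ℝ))
        = fun k => (l • (1 : Matrix (Fin n) (Fin n) ℝ) - L) k i - l / n := by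
      rw [Matrix.mulVec_sub, Matrix.mulVec_smul, Matrix.sub_mulVec _ _ (fun _ => (1 : ℝ)), hone,
        Matrix.smul_mulVec, Matrix.one_mulVec]
      ext k
      simp
      ring
    have hcol : ∑ k, L k i = 0 := by
      rw [← dL_row G i]
      exact Finset.sum_congr rfl fun k _ => dL_symm G k i
    rw [h2, star_trivial, sub_dotProduct, smul_dotProduct] at h
    have h3 : (fun _ => (1 : ℝ)) ⬝ᵥ
        (fun k => (l • (1 : Matrix (Fin n) (Fin n) ℝ) - L) k i - l / n) = 0 := by
      simp [dotProduct, Finset.sum_sub_distrib, hcol, Matrix.one_apply]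
      field_simp
      ring
    rw [h3] at h
    simpa [hN] using h
  have hoff : ∀ i j, i ≠ j → N i j = (G.dist i j : ℝ) - 1 + (1 - l / n) := by
    intro i j hij
    simp [hN, hL, distLaplacian, hij]
  have htr : (n : ℝ) ≤ L a a := by
    have h1 : ∀ k, (if k = a then (0 : ℝ) else 1) + (if k = b then 1 else 0) ≤ G.dist a k := by
      intro k
      by_cases hka : k = a
      · subst hka; simp [hab]
      · by_cases hkb : k = b
        · subst hkb
          have := hG.one_lt_dist_of_ne_of_not_adj hab hadj
          have : (2 : ℝ) ≤ G.dist a k := by exact_mod_cast this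
          simp [hka]; linarith
        · have := hG.pos_dist_of_ne (Ne.symm hka)
          have : (1 : ℝ) ≤ G.dist a k := by exact_mod_cast this
          simpa [hka, hkb] using this
    have h2 := Finset.sum_le_sum fun k (_ : k ∈ Finset.univ) => h1 k
    have h4 : ∀ k : Fin n, (if k = a then (0 : ℝ) else 1) = 1 - if k = a then 1 else 0 := by
      intro k; split_ifs <;> simp
    have h3 : L a a = ∑ k, (G.dist a k : ℝ) := by simp [hL, distLaplacian]
    rw [h3]
    refine le_trans (le_of_eq ?_) h2
    simp only [h4]
    simp [Finset.sum_add_distrib, Finset.sum_sub_distrib]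
  have hc : 1 < l / n := by
    have h1 := hdiag a
    have h2 : N a a = l - L a a - l / n := by simp [hN]
    rw [h2] at h1
    have h3 : l = (l / n) * n := by field_simp
    by_contra hcon
    push Not at hcon
    generalize l / n = c at *
    nlinarith
  have hl0 : l ≠ 0 := by
    intro h
    rw [h] at hc
    norm_num at hc
  refine ⟨N, 1 - l / n, by linarith, hoff, hdiag, ?_⟩
  have hJ : ∀ v : Fin n → ℝ, N *ᵥ v = l • v - L *ᵥ v - fun _ => (l / n) * ∑ k, v k := by
    intro v
    rw [hN, Matrix.sub_mulVec, Matrix.sub_mulVec, Matrix.smul_mulVec, Matrix.one_mulVec]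
    congr 1
    ext k
    simp [mulVec, dotProduct, Finset.mul_sum]
  have hsum : ∀ v ∈ Module.End.eigenspace L.mulVecLin l, ∑ k, v k = 0 := by
    intro v hv
    rw [Module.End.mem_eigenspace_iff, Matrix.mulVecLin_apply] at hv
    have h1 : (∑ k, (L *ᵥ v) k) = 0 := by
      simp only [mulVec, dotProduct]
      rw [Finset.sum_comm]
      refine Finset.sum_eq_zero fun j _ => ?_
      rw [← Finset.sum_mul]
      have : ∑ i, L i j = 0 := by
        rw [← dL_row G j]
        exact Finset.sum_congr rfl fun k _ => dL_symm G k j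
      rw [this, zero_mul]
    rw [hv] at h1
    simp only [Pi.smul_apply, smul_eq_mul, ← Finset.mul_sum] at h1
    exact (mul_eq_zero.mp h1).resolve_left hl0
  have hker : Module.End.eigenspace L.mulVecLin l ⊔ Submodule.span ℝ {fun _ => (1 : ℝ)}
      ≤ LinearMap.ker N.mulVecLin := by
    refine sup_le ?_ ?_
    · intro v hv
      have h1 := hsum v hv
      rw [Module.End.mem_eigenspace_iff, Matrix.mulVecLin_apply] at hv
      rw [LinearMap.mem_ker, Matrix.mulVecLin_apply, hJ, hv, h1]
      ext k; simp
    · rw [Submodule.span_singleton_le_iff_mem, LinearMap.mem_ker, Matrix.mulVecLin_apply, hJ, hone]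
      ext k; simp
      field_simp
      ring
  have hdisj : Disjoint (Module.End.eigenspace L.mulVecLin l)
      (Submodule.span ℝ {fun _ : Fin n => (1 : ℝ)}) := by
    rw [Submodule.disjoint_def]
    intro v hv hv2
    have h1 := hsum v hv
    obtain ⟨t, rfl⟩ := Submodule.mem_span_singleton.mp hv2
    simp at h1
    rcases h1 with h1 | h1
    · omega
    · simp [h1]
  have hspan : Module.finrank ℝ (Submodule.span ℝ {fun _ : Fin n => (1 : ℝ)}) = 1 := by
    apply finrank_span_singleton
    intro h
    have := congrFun h ⟨0, by omega⟩
    simp at this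
  have hdim := Submodule.finrank_sup_add_finrank_inf_eq (Module.End.eigenspace L.mulVecLin l)
      (Submodule.span ℝ {fun _ : Fin n => (1 : ℝ)})
  rw [hdisj.eq_bot, finrank_bot, hspan] at hdim
  have hm : Module.finrank ℝ (Module.End.eigenspace L.mulVecLin l) = n - 3 := hmult
  have hle := Submodule.finrank_mono hker
  have hrn := N.mulVecLin.finrank_range_add_finrank_ker
  rw [Module.finrank_fin_fun] at hrn
  have hrank : N.rank ≤ 2 := by
    unfold Matrix.rank
    omega
  intro r s
  by_contra hdet
  have h1 := Matrix.rank_of_isUnit (N.submatrix r s)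
    ((Matrix.isUnit_iff_isUnit_det _).mpr (isUnit_iff_ne_zero.mpr hdet))
  have h2 := N.rank_submatrix_le r s
  rw [Fintype.card_fin] at h1
  omega

lemma dist_two {V : Type*} {G : SimpleGraph V} (hG : G.Connected) (i j k : V)
    (hne : i ≠ j) (h : ¬ G.Adj i j) (h1 : G.Adj i k) (h2 : G.Adj k j) : G.dist i j = 2 := by
  have := hG.one_lt_dist_of_ne_of_not_adj hne h
  have h3 := hG.dist_triangle (u := i) (v := k) (w := j)
  rw [SimpleGraph.dist_eq_one_iff_adj.mpr h1, SimpleGraph.dist_eq_one_iff_adj.mpr h2] at h3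
  omega

/-- The distances of an induced subgraph of diameter at most two are kept. -/
lemma emb_dist {n : ℕ} {G : SimpleGraph (Fin n)} (hG : G.Connected) {H : SimpleGraph (Fin 5)}
    (f : H ↪g G) (h2 : ∀ i j, i ≠ j → ¬ H.Adj i j → ∃ k, H.Adj i k ∧ H.Adj k j) (i j : Fin 5)
    (hij : i ≠ j) : (H.Adj i j → G.dist (f i) (f j) = 1) ∧ (¬ H.Adj i j → G.dist (f i) (f j) = 2) := by
  constructor
  · intro h
    exact SimpleGraph.dist_eq_one_iff_adj.mpr (f.map_adj_iff.mpr h)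
  · intro h
    obtain ⟨k, hk1, hk2⟩ := h2 i j hij h
    exact dist_two hG _ _ (f k) (fun h' => hij (f.injective h')) (fun h' => h (f.map_adj_iff.mp h'))
      (f.map_adj_iff.mpr hk1) (f.map_adj_iff.mpr hk2)

lemma C5_adj (i j : Fin 5) : C5.Adj i j ↔ (s(i, j) = s(0, 1) ∨ s(i, j) = s(1, 2) ∨ s(i, j) = s(2, 3)
    ∨ s(i, j) = s(3, 4) ∨ s(i, j) = s(4, 0)) ∧ i ≠ j := Iff.rfl

instance C5_dec : DecidableRel C5.Adj := fun i j => decidable_of_iff _ (C5_adj i j).symm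

lemma J2_adj (i j : Fin 5) : J2.Adj i j ↔ (s(i, j) = s(0, 1) ∨ s(i, j) = s(1, 2) ∨ s(i, j) = s(2, 3)
    ∨ s(i, j) = s(3, 4) ∨ s(i, j) = s(4, 0) ∨ s(i, j) = s(1, 4)) ∧ i ≠ j := Iff.rfl

lemma J3_adj (i j : Fin 5) : J3.Adj i j ↔ (s(i, j) = s(0, 1) ∨ s(i, j) = s(1, 2) ∨ s(i, j) = s(2, 3)
    ∨ s(i, j) = s(3, 4) ∨ s(i, j) = s(4, 0) ∨ s(i, j) = s(1, 4) ∨ s(i, j) = s(2, 4)) ∧ i ≠ j :=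
  Iff.rfl

/-- The entries of `N` on the induced subgraph. -/
lemma emb_entry {n : ℕ} {G : SimpleGraph (Fin n)} (hG : G.Connected) {H : SimpleGraph (Fin 5)}
    (f : H ↪g G) (h2 : ∀ i j, i ≠ j → ¬ H.Adj i j → ∃ k, H.Adj i k ∧ H.Adj k j)
    (N : Matrix (Fin n) (Fin n) ℝ) (e : ℝ)
    (hN : ∀ i j, i ≠ j → N i j = (G.dist i j : ℝ) - 1 + e) (i j : Fin 5) (hij : i ≠ j) :
    (H.Adj i j → N (f i) (f j) = e) ∧ (¬ H.Adj i j → N (f i) (f j) = 1 + e) := by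
  have h := emb_dist hG f h2 i j hij
  have h3 := hN (f i) (f j) (fun h' => hij (f.injective h'))
  constructor
  · intro h4
    rw [h3, h.1 h4]; norm_num
  · intro h4
    rw [h3, h.2 h4]; norm_num

lemma no_J2 (n : ℕ) (hn : 6 ≤ n) (G : SimpleGraph (Fin n)) (hG : G.Connected)
    (hmult : eigMult (distLaplacian G) (lambdaMax (distLaplacian G)) = n - 3) (f : J2 ↪g G) :
    False := by
  have h2 : ∀ i j, i ≠ j → ¬ J2.Adj i j → ∃ k, J2.Adj i k ∧ J2.Adj k j := by
    simp only [J2_adj]; decide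
  have hna : ¬ J2.Adj 0 2 := by simp only [J2_adj]; decide
  obtain ⟨N, e, he, hN, hd, hdet⟩ := core n hn G hG hmult (f 0) (f 2)
    (fun h => absurd (f.injective h) (by decide)) (fun h => hna (f.map_adj_iff.mp h))
  have E := emb_entry hG f h2 N e hN
  have h := hdet ![f 0, f 1, f 3] ![f 0, f 2, f 4]
  have e02 := (E 0 2 (by decide)).2 (by simp only [J2_adj]; decide)
  have e04 := (E 0 4 (by decide)).1 (by simp only [J2_adj]; decide)
  have e10 := (E 1 0 (by decide)).1 (by simp only [J2_adj]; decide)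
  have e12 := (E 1 2 (by decide)).1 (by simp only [J2_adj]; decide)
  have e14 := (E 1 4 (by decide)).1 (by simp only [J2_adj]; decide)
  have e30 := (E 3 0 (by decide)).2 (by simp only [J2_adj]; decide)
  have e32 := (E 3 2 (by decide)).1 (by simp only [J2_adj]; decide)
  have e34 := (E 3 4 (by decide)).1 (by simp only [J2_adj]; decide)
  rw [Matrix.det_fin_three] at h
  simp [e02, e04, e10, e12, e14, e30, e32, e34] at h
  apply he.ne
  linear_combination h

lemma no_J3 (n : ℕ) (hn : 6 ≤ n) (G : SimpleGraph (Fin n)) (hG : G.Connected)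
    (hmult : eigMult (distLaplacian G) (lambdaMax (distLaplacian G)) = n - 3) (f : J3 ↪g G) :
    False := by
  have h2 : ∀ i j, i ≠ j → ¬ J3.Adj i j → ∃ k, J3.Adj i k ∧ J3.Adj k j := by
    simp only [J3_adj]; decide
  have hna : ¬ J3.Adj 0 2 := by simp only [J3_adj]; decide
  obtain ⟨N, e, he, hN, hd, hdet⟩ := core n hn G hG hmult (f 0) (f 2)
    (fun h => absurd (f.injective h) (by decide)) (fun h => hna (f.map_adj_iff.mp h))
  have E := emb_entry hG f h2 N e hN
  have h := hdet ![f 4, f 0, f 2] ![f 4, f 1, f 3]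
  have e41 := (E 4 1 (by decide)).1 (by simp only [J3_adj]; decide)
  have e43 := (E 4 3 (by decide)).1 (by simp only [J3_adj]; decide)
  have e04 := (E 0 4 (by decide)).1 (by simp only [J3_adj]; decide)
  have e01 := (E 0 1 (by decide)).1 (by simp only [J3_adj]; decide)
  have e03 := (E 0 3 (by decide)).2 (by simp only [J3_adj]; decide)
  have e24 := (E 2 4 (by decide)).1 (by simp only [J3_adj]; decide)
  have e21 := (E 2 1 (by decide)).1 (by simp only [J3_adj]; decide)
  have e23 := (E 2 3 (by decide)).1 (by simp only [J3_adj]; decide)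
  rw [Matrix.det_fin_three] at h
  simp [e41, e43, e04, e01, e03, e24, e21, e23] at h
  have hy := hd (f 4)
  have h5 : e * (N (f 4) (f 4) - e) = 0 := by linear_combination -h
  rcases mul_eq_zero.mp h5 with h6 | h6 <;> linarith

lemma no_C5 (n : ℕ) (hn : 6 ≤ n) (G : SimpleGraph (Fin n)) (hG : G.Connected)
    (hmult : eigMult (distLaplacian G) (lambdaMax (distLaplacian G)) = n - 3) (f : C5 ↪g G) :
    False := by
  have h2 : ∀ i j, i ≠ j → ¬ C5.Adj i j → ∃ k, C5.Adj i k ∧ C5.Adj k j := by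
    decide
  have hna : ¬ C5.Adj 0 2 := by simp only [C5_adj]; decide
  obtain ⟨N, e, he, hN, hd, hdet⟩ := core n hn G hG hmult (f 0) (f 2)
    (fun h => absurd (f.injective h) (by decide)) (fun h => hna (f.map_adj_iff.mp h))
  have E := emb_entry hG f h2 N e hN
  -- a sixth vertex
  obtain ⟨w, hw⟩ : ∃ w, ∀ i, f i ≠ w := by
    by_contra hcon
    push Not at hcon
    have := Fintype.card_le_of_surjective f hcon
    simp at this
    omega
  have ea : ∀ i : Fin 5, N (f i) (f (i + 1)) = e := fun i =>
    (E i (i + 1) (by revert i; decide)).1 (by revert i; simp only [C5_adj]; decide)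
  have eb : ∀ i : Fin 5, N (f i) (f (i + 4)) = e := fun i =>
    (E i (i + 4) (by revert i; decide)).1 (by revert i; simp only [C5_adj]; decide)
  have ec : ∀ i : Fin 5, N (f i) (f (i + 2)) = 1 + e := fun i =>
    (E i (i + 2) (by revert i; decide)).2 (by revert i; simp only [C5_adj]; decide)
  have ed : ∀ i : Fin 5, N (f i) (f (i + 3)) = 1 + e := fun i =>
    (E i (i + 3) (by revert i; decide)).2 (by revert i; simp only [C5_adj]; decide)
  have hq : 5 * e ^ 2 + 5 * e + 1 = 0 := by
    have m1 := hdet ![f 0, f 1, f 2] ![f 0, f 3, f 4]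
    have m2 := hdet ![f 0, f 1, f 3] ![f 0, f 2, f 4]
    have e02 := ec 0
    have e03 := ed 0
    have e04 := eb 0
    have e10 := eb 1
    have e12 := ea 1
    have e13 := ec 1
    have e14 := ed 1
    have e20 := ed 2
    have e23 := ea 2
    have e24 := ec 2
    have e30 := ec 3
    have e32 := eb 3
    have e34 := ea 3
    simp only [Fin.reduceAdd, zero_add] at e02 e03 e04 e10 e12 e13 e14 e20 e23 e24 e30 e32 e34
    rw [Matrix.det_fin_three] at m1 m2
    simp [e03, e04, e10, e13, e14, e20, e23, e24] at m1
    simp [e02, e04, e10, e12, e14, e30, e32, e34] at m2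
    linear_combination e * m1 + (1 + e) * m2
  -- the minors which involve the sixth vertex
  have key : ∀ i : Fin 5, ((G.dist (f i) w : ℝ) - 1) + ((G.dist (f (i + 2)) w : ℝ) - 1)
      - ((G.dist (f (i + 1)) w : ℝ) - 1) + e * (((G.dist (f i) w : ℝ) - 1)
      + ((G.dist (f (i + 2)) w : ℝ) - 1) + 1 - 2 * ((G.dist (f (i + 1)) w : ℝ) - 1)) = 0 := by
    intro i
    have m := hdet ![f i, f (i + 1), f (i + 2)] ![w, f (i + 3), f (i + 4)]
    have w0 := hN (f i) w (hw i)
    have w1 := hN (f (i + 1)) w (hw _)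
    have w2 := hN (f (i + 2)) w (hw _)
    have e03 := ed i
    have e04 := eb i
    have e13 := ec (i + 1)
    have e14 := ed (i + 1)
    have e23 := ea (i + 2)
    have e24 := ec (i + 2)
    simp only [add_assoc, Fin.reduceAdd] at e03 e04 e13 e14 e23 e24
    rw [Matrix.det_fin_three] at m
    simp [e03, e04, e13, e14, e23, e24, w0, w1, w2] at m
    linear_combination m
  have k0 := key 0
  have k1 := key 1
  have k2 := key 2
  have k3 := key 3
  have k4 := key 4
  simp only [Fin.reduceAdd, zero_add] at k0 k1 k2 k3 k4
  set P : ℤ := G.dist (f 0) w + G.dist (f 1) w + G.dist (f 2) w + G.dist (f 3) w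
    + G.dist (f 4) w - 5 with hP
  have hPe : (P : ℝ) + 5 * e = 0 := by
    rw [hP]; push_cast
    linear_combination k0 + k1 + k2 + k3 + k4
  have hq2 : (P : ℝ) ^ 2 - 5 * P + 5 = 0 := by
    have : e = -(P : ℝ) / 5 := by linarith
    rw [this] at hq
    linear_combination 5 * hq
  have hq3 : P ^ 2 - 5 * P + 5 = 0 := by exact_mod_cast hq2
  have h1 : 1 < P := by nlinarith
  have h4 : P < 4 := by nlinarith
  interval_cases P <;> omega

/-- If `G` is a connected graph on `n ≥ 6` vertices whose largest distance
Laplacian eigenvalue has multiplicity `n - 3`, then none of `C₅`, `J₂`, `J₃` is an induced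
subgraph of `G`. -/
theorem no_induced_C5_J2_J3_of_multiplicity_eq_sub_three
    (n : ℕ) (hn : 6 ≤ n) (G : SimpleGraph (Fin n)) (hG : G.Connected)
    (hmult : eigMult (distLaplacian G) (lambdaMax (distLaplacian G)) = n - 3) :
    IsEmpty (C5 ↪g G) ∧ IsEmpty (J2 ↪g G) ∧ IsEmpty (J3 ↪g G) := by
  exact ⟨⟨no_C5 n hn G hG hmult⟩, ⟨no_J2 n hn G hG hmult⟩, ⟨no_J3 n hn G hG hmult⟩⟩
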